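/- arXiv:2110.00300 — 5 statements merged into one kernel-verified Lean document; each statement's English description precedes it below -/
import Mathlib

section
/- Let n, m be positive natural numbers, let A be a real n×n matrix that is invertible with every entry of A⁻¹ nonnegative (a monotone matrix), and let B be a real n×m matrix with every entry nonpositive. Assume in addition the zero row-sum property: for every row i, (∑_{j} A_{ij}) + (∑_{k} B_{ik}) = 0. If vectors f ∈ ℝⁿ and g ∈ ℝᵐ satisfy A·f + B·g = 0, then for every index i one has (min_{k} g_k) ≤ f_i ≤ (max_{k} g_k). -/
/-! A monotone matrix reflects nonnegativity: `0 ≤ A v` gives `v = A⁻¹ (A v) ≥ 0`. If `c` is a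
lower bound of `g`, the row-sum property gives `A (f - c) = -B (g - c)`, which is nonnegative
because `B ≤ 0`; hence `c ≤ f`. This is `le_of_le_boundary`. The upper bound is the lower bound
for `-f` and `-g`. -/

theorem nonneg_of_mulVec_nonneg {n : ℕ} {A : Matrix (Fin n) (Fin n) ℝ}
    (hAinv : IsUnit A) (hAmon : ∀ i j, 0 ≤ A⁻¹ i j) (v : Fin n → ℝ)
    (hv : ∀ i, 0 ≤ A.mulVec v i) (i : Fin n) : 0 ≤ v i := by
  have h : A⁻¹.mulVec (A.mulVec v) = v := by
    rw [Matrix.mulVec_mulVec, Matrix.nonsing_inv_mul _ ((Matrix.isUnit_iff_isUnit_det _).1 hAinv),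
      Matrix.one_mulVec]
  rw [← h]
  change 0 ≤ ∑ j, A⁻¹ i j * A.mulVec v j
  exact Finset.sum_nonneg fun j _ => mul_nonneg (hAmon i j) (hv j)

theorem le_of_le_boundary {n m : ℕ}
    {A : Matrix (Fin n) (Fin n) ℝ} {B : Matrix (Fin n) (Fin m) ℝ}
    (hAinv : IsUnit A) (hAmon : ∀ i j, 0 ≤ A⁻¹ i j)
    (hB : ∀ i k, B i k ≤ 0)
    (hrow : ∀ i, (∑ j, A i j) + (∑ k, B i k) = 0)
    (f : Fin n → ℝ) (g : Fin m → ℝ)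
    (heq : A.mulVec f + B.mulVec g = 0) (c : ℝ) (hc : ∀ k, c ≤ g k) (i : Fin n) : c ≤ f i := by
  refine sub_nonneg.1 (nonneg_of_mulVec_nonneg hAinv hAmon (fun j => f j - c) (fun j => ?_) i)
  have h1 : (∑ l, A j l * f l) + ∑ k, B j k * g k = 0 := congrFun heq j
  have h2 : ∑ k, B j k * (g k - c) ≤ 0 :=
    Finset.sum_nonpos fun k _ => mul_nonpos_of_nonpos_of_nonneg (hB j k) (sub_nonneg.2 (hc k))
  change 0 ≤ ∑ l, A j l * (f l - c)
  simp only [mul_sub, Finset.sum_sub_distrib, ← Finset.sum_mul] at h2 ⊢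
  linear_combination h2 - h1 + c * hrow j

/-- Discrete minimum-maximum principle: if `A` is a monotone matrix
(invertible with entrywise nonnegative inverse), `B` has nonpositive entries,
the rows of `[A B]` sum to zero and `A·f + B·g = 0`, then each `f i` lies
between the minimum and maximum of the boundary values `g`. -/
theorem min_max_principle
    (n m : ℕ) (hn : 0 < n) (hm : 0 < m)
    (A : Matrix (Fin n) (Fin n) ℝ) (B : Matrix (Fin n) (Fin m) ℝ)
    (hAinv : IsUnit A) (hAmon : ∀ i j, 0 ≤ A⁻¹ i j)
    (hB : ∀ i k, B i k ≤ 0)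
    (hrow : ∀ i, (∑ j, A i j) + (∑ k, B i k) = 0)
    (f : Fin n → ℝ) (g : Fin m → ℝ)
    (heq : A.mulVec f + B.mulVec g = 0) :
    ∀ i, (⨅ k, g k) ≤ f i ∧ f i ≤ (⨆ k, g k) := by
  intro i
  have hneg : A.mulVec (-f) + B.mulVec (-g) = 0 := by
    rw [Matrix.mulVec_neg, Matrix.mulVec_neg, ← neg_add, heq, neg_zero]
  exact ⟨le_of_le_boundary hAinv hAmon hB hrow f g heq _
      (fun k => ciInf_le (Set.finite_range g).bddBelow k) i,
    neg_le_neg_iff.1 (le_of_le_boundary hAinv hAmon hB hrow (-f) (-g) hneg _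
      (fun k => neg_le_neg (le_ciSup (Set.finite_range g).bddAbove k)) i)⟩
end

section
/- For each p ∈ {1,2,3,4} let λ1(p), λ2(p), ν1(p), ν2(p) be positive reals, let μ1(p), μ2(p) be nonnegative reals with μ1(p) + μ2(p) = 1, let θ(p) ≥ 0, let c2(p) ∈ (0,1), and let ψ1(p) ∈ {0,1}. Define m1 = ∑_{p=1}^{4} ( μ1(p)·λ1(p) + μ2(p)·λ2(p) + θ(p)·μ1(p)·ν1(p) ), m2 = −( μ1(1)·λ1(1) + μ2(1)·λ2(1) + c2(1)·μ2(1)·ν2(1) + ψ1(2)·θ(2)·μ1(2)·ν1(2) + (1−ψ1(4))·θ(4)·μ1(4)·ν1(4) ), and m6 = −( μ1(3)·λ1(3) + μ2(3)·λ2(3) + c2(3)·μ2(3)·ν2(3) + ψ1(4)·θ(4)·μ1(4)·ν1(4) + (1−ψ1(2))·θ(2)·μ1(2)·ν1(2) ). If c2(1) + c2(3) < ( min(λ1(2),λ2(2)) + min(λ1(4),λ2(4)) ) / max(ν2(1),ν2(3)), then m1 + m2 + m6 > 0. (Condition (A2) of the monotonicity criteria.) -/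
/-!
In `m1 + m2 + m6` the convex combinations `μ1 λ1 + μ2 λ2` of the east and west edges
cancel. So do the upwind terms of the north and south edges, since `ψ1` and `1 - ψ1`
split each of them between the two neighbours. What remains is the nonnegative upwind
terms of the east and west edges, plus the convex combinations of the north and south
edges, which are at least `min λ1 λ2` (`min_le_convex_combination`), minus the cross
terms `c2 μ2 ν2` of the east and west edges, whose sum is at most `(c2 0 + c2 2) * max ν2`
(`cross_term_le`). The bound on `c2 0 + c2 2` makes this positive.
-/

/-- A convex combination of two reals is at least their minimum. -/
lemma min_le_convex_combination {a b s t : ℝ} (hs : 0 ≤ s) (ht : 0 ≤ t)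
    (hst : s + t = 1) : min a b ≤ s * a + t * b :=
  calc min a b = s * min a b + t * min a b := by rw [← add_mul, hst, one_mul]
    _ ≤ s * a + t * b := by
      gcongr
      · exact min_le_left a b
      · exact min_le_right a b

/-- The cross term of an edge: a weight `t ≤ 1` and a coefficient `v ≤ M` only
shrink `c * M`. -/
lemma cross_term_le {c t v M : ℝ} (hc : 0 ≤ c) (ht : t ≤ 1) (hv : 0 ≤ v)
    (hvM : v ≤ M) : c * t * v ≤ c * M :=
  calc c * t * v ≤ c * 1 * M := by gcongr
    _ = c * M := by rw [mul_one]

/-- Condition (A2): under the bound on `c2(1) + c2(3)`, the diagonal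
dominates the east and west off-diagonal coefficients: `m1 + m2 + m6 > 0`.
Edges `1,2,3,4` are indexed by `0,1,2,3 : Fin 4`. -/
theorem A2_diagonal_dominance
    (lam1 lam2 nu1 nu2 mu1 mu2 theta c2 psi1 : Fin 4 → ℝ)
    (hlam1 : ∀ p, 0 < lam1 p) (hlam2 : ∀ p, 0 < lam2 p)
    (hnu1 : ∀ p, 0 < nu1 p) (hnu2 : ∀ p, 0 < nu2 p)
    (hmu1 : ∀ p, 0 ≤ mu1 p) (hmu2 : ∀ p, 0 ≤ mu2 p)
    (hmusum : ∀ p, mu1 p + mu2 p = 1)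
    (htheta : ∀ p, 0 ≤ theta p)
    (hc2 : ∀ p, c2 p ∈ Set.Ioo (0 : ℝ) 1)
    (hpsi1 : ∀ p, psi1 p = 0 ∨ psi1 p = 1)
    (hbound : c2 0 + c2 2 <
      (min (lam1 1) (lam2 1) + min (lam1 3) (lam2 3)) / max (nu2 0) (nu2 2)) :
    (∑ p : Fin 4,
        (mu1 p * lam1 p + mu2 p * lam2 p + theta p * mu1 p * nu1 p))
      + (-(mu1 0 * lam1 0 + mu2 0 * lam2 0 + c2 0 * mu2 0 * nu2 0
          + psi1 1 * theta 1 * mu1 1 * nu1 1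
          + (1 - psi1 3) * theta 3 * mu1 3 * nu1 3))
      + (-(mu1 2 * lam1 2 + mu2 2 * lam2 2 + c2 2 * mu2 2 * nu2 2
          + psi1 3 * theta 3 * mu1 3 * nu1 3
          + (1 - psi1 1) * theta 1 * mu1 1 * nu1 1)) > 0 := by
  have hM : 0 < max (nu2 0) (nu2 2) := lt_max_of_lt_left (hnu2 0)
  rw [lt_div_iff₀ hM] at hbound
  have hmu2_le (p : Fin 4) : mu2 p ≤ 1 := by linarith [hmu1 p, hmusum p]
  have hE := cross_term_le (hc2 0).1.le (hmu2_le 0) (hnu2 0).le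
    (le_max_left (nu2 0) (nu2 2))
  have hW := cross_term_le (hc2 2).1.le (hmu2_le 2) (hnu2 2).le
    (le_max_right (nu2 0) (nu2 2))
  have hN := min_le_convex_combination (a := lam1 1) (b := lam2 1)
    (hmu1 1) (hmu2 1) (hmusum 1)
  have hS := min_le_convex_combination (a := lam1 3) (b := lam2 3)
    (hmu1 3) (hmu2 3) (hmusum 3)
  have hT (p : Fin 4) : 0 ≤ theta p * mu1 p * nu1 p :=
    mul_nonneg (mul_nonneg (htheta p) (hmu1 p)) (hnu1 p).le
  have hT0 := hT 0
  have hT2 := hT 2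
  rw [Fin.sum_univ_four]
  -- The `theta` terms of edges `1` and `3` cancel identically in `psi1`.
  linarith
end

section
/- Consider two grid cells K and K'. For each p ∈ {1,2,3,4} let λ1(p), λ2(p), ν1(p), ν2(p) (for K) and λ1'(p), λ2'(p), ν1'(p), ν2'(p) (for K') be positive reals; let μ1(p), μ2(p), μ1'(p), μ2'(p) be nonnegative with μ1(p)+μ2(p)=1 and μ1'(p)+μ2'(p)=1; let θ(p), θ'(p) ∈ [0,2]; let ψ1(p), ψ1'(p), ψ2'(p) ∈ {0,1}; and let c2(p) ∈ (0,1) be shared by the two cells. Define m1 = ∑_{p=1}^{4}( μ1(p)·λ1(p) + μ2(p)·λ2(p) + θ(p)·μ1(p)·ν1(p) ), m6 = −( μ1(3)·λ1(3) + μ2(3)·λ2(3) + c2(3)·μ2(3)·ν2(3) + ψ1(4)·θ(4)·μ1(4)·ν1(4) + (1−ψ1(2))·θ(2)·μ1(2)·ν1(2) ), m4' = −( μ1'(2)·λ1'(2) + μ2'(2)·λ2'(2) + c2(2)·μ2'(2)·ν2'(2) + ψ1'(1)·θ'(1)·μ1'(1)·ν1'(1) + (1−ψ1'(3))·θ'(3)·μ1'(3)·ν1'(3)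 ), m5' = ψ2'(2)·c2(2)·μ2'(2)·ν2'(2) + ψ2'(3)·c2(3)·μ2'(3)·ν2'(3), and A' = ∑_{p=1}^{4} max(λ1(p),λ2(p)) + 2·∑_{p=1}^{4} ν1(p). If c2(2) + c2(3) < ( min(λ1(3),λ2(3)) · min(λ1'(2),λ2'(2)) ) / ( max(ν2'(2),ν2'(3)) · A' ), then m6·m4' − m5'·m1 > 0. (Condition (A3b) of the monotonicity criteria.) -/
/-!
Up to sign, each of `m6` and `m4'` is a convex combination of `λ1, λ2` plus nonnegative terms, so
`m6 * m4'` is at least the product of the two minima. On the other side, with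
`N = max (ν2' 2) (ν2' 3)`, one has `m5' ≤ (c2 2 + c2 3) * N` because the indicators and weights are
at most `1`, and `0 ≤ m1 ≤ A'` because a convex combination is at most the maximum and `θ μ1 ≤ 2`.
After clearing the positive denominator `N * A'`, the hypothesis says exactly that the upper bound
for `m5' * m1` is smaller than the lower bound for `m6 * m4'`.
Edges are numbered from `1` here, and from `0` in the `Fin 4` indices below.
-/

lemma min_le_convex {a b s t : ℝ} (hs : 0 ≤ s) (ht : 0 ≤ t) (h : s + t = 1) :
    min a b ≤ s * a + t * b := by
  have h1 := mul_le_mul_of_nonneg_left (min_le_left a b) hs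
  have h2 := mul_le_mul_of_nonneg_left (min_le_right a b) ht
  have h3 : s * min a b + t * min a b = min a b := by rw [← add_mul, h, one_mul]
  linarith

lemma convex_le_max {a b s t : ℝ} (hs : 0 ≤ s) (ht : 0 ≤ t) (h : s + t = 1) :
    s * a + t * b ≤ max a b := by
  have h1 := mul_le_mul_of_nonneg_left (le_max_left a b) hs
  have h2 := mul_le_mul_of_nonneg_left (le_max_right a b) ht
  have h3 : s * max a b + t * max a b = max a b := by rw [← add_mul, h, one_mul]
  linarith

/-- Bound on one summand of `m5'`: the indicator `e` and the weight `m ≤ 1` can be dropped. -/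
lemma indicator_term_le {e c m n N : ℝ} (he : e = 0 ∨ e = 1) (hc : 0 ≤ c)
    (hm1 : m ≤ 1) (hn : 0 ≤ n) (hN : n ≤ N) : e * c * m * n ≤ c * N := by
  have hN0 : 0 ≤ N := hn.trans hN
  have h : m * n ≤ N := (mul_le_of_le_one_left hn hm1).trans hN
  rcases he with rfl | rfl
  · simpa using mul_nonneg hc hN0
  · calc 1 * c * m * n = c * (m * n) := by ring
      _ ≤ c * N := mul_le_mul_of_nonneg_left h hc

lemma indicator_nonneg {e : ℝ} (he : e = 0 ∨ e = 1) : 0 ≤ e ∧ 0 ≤ 1 - e := by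
  rcases he with rfl | rfl <;> norm_num

/-- Condition (A3b): `m6·m4' − m5'·m1 > 0` for a cell `K` and its southern
neighbour `K'`. Edges `1,2,3,4` are indexed by `0,1,2,3 : Fin 4`. -/
theorem A3b_cross_product_positive
    (lam1 lam2 nu1 nu2 mu1 mu2 theta psi1 : Fin 4 → ℝ)
    (lam1' lam2' nu1' nu2' mu1' mu2' theta' psi1' psi2' : Fin 4 → ℝ)
    (c2 : Fin 4 → ℝ)
    (hlam1 : ∀ p, 0 < lam1 p) (hlam2 : ∀ p, 0 < lam2 p)
    (hnu1 : ∀ p, 0 < nu1 p) (hnu2 : ∀ p, 0 < nu2 p)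
    (hlam1' : ∀ p, 0 < lam1' p) (hlam2' : ∀ p, 0 < lam2' p)
    (hnu1' : ∀ p, 0 < nu1' p) (hnu2' : ∀ p, 0 < nu2' p)
    (hmu1 : ∀ p, 0 ≤ mu1 p) (hmu2 : ∀ p, 0 ≤ mu2 p)
    (hmusum : ∀ p, mu1 p + mu2 p = 1)
    (hmu1' : ∀ p, 0 ≤ mu1' p) (hmu2' : ∀ p, 0 ≤ mu2' p)
    (hmusum' : ∀ p, mu1' p + mu2' p = 1)
    (htheta : ∀ p, theta p ∈ Set.Icc (0 : ℝ) 2)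
    (htheta' : ∀ p, theta' p ∈ Set.Icc (0 : ℝ) 2)
    (hpsi1 : ∀ p, psi1 p = 0 ∨ psi1 p = 1)
    (hpsi1' : ∀ p, psi1' p = 0 ∨ psi1' p = 1)
    (hpsi2' : ∀ p, psi2' p = 0 ∨ psi2' p = 1)
    (hc2 : ∀ p, c2 p ∈ Set.Ioo (0 : ℝ) 1)
    (hbound : c2 1 + c2 2 <
      (min (lam1 2) (lam2 2) * min (lam1' 1) (lam2' 1)) /
        (max (nu2' 1) (nu2' 2) *
          ((∑ p : Fin 4, max (lam1 p) (lam2 p)) + 2 * ∑ p : Fin 4, nu1 p))) :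
    (-(mu1 2 * lam1 2 + mu2 2 * lam2 2 + c2 2 * mu2 2 * nu2 2
        + psi1 3 * theta 3 * mu1 3 * nu1 3
        + (1 - psi1 1) * theta 1 * mu1 1 * nu1 1))
      * (-(mu1' 1 * lam1' 1 + mu2' 1 * lam2' 1 + c2 1 * mu2' 1 * nu2' 1
        + psi1' 0 * theta' 0 * mu1' 0 * nu1' 0
        + (1 - psi1' 2) * theta' 2 * mu1' 2 * nu1' 2))
      - (psi2' 1 * c2 1 * mu2' 1 * nu2' 1
        + psi2' 2 * c2 2 * mu2' 2 * nu2' 2)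
      * (∑ p : Fin 4,
          (mu1 p * lam1 p + mu2 p * lam2 p + theta p * mu1 p * nu1 p))
      > 0 := by
  have hL : 0 < min (lam1 2) (lam2 2) := lt_min (hlam1 2) (hlam2 2)
  have hL' : 0 < min (lam1' 1) (lam2' 1) := lt_min (hlam1' 1) (hlam2' 1)
  have hN : 0 < max (nu2' 1) (nu2' 2) := lt_max_of_lt_left (hnu2' 1)
  have hA : 0 < (∑ p : Fin 4, max (lam1 p) (lam2 p)) + 2 * ∑ p : Fin 4, nu1 p := by
    have h1 : 0 ≤ ∑ p : Fin 4, max (lam1 p) (lam2 p) :=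
      Finset.sum_nonneg fun p _ => (hlam1 p).le.trans (le_max_left _ _)
    have h2 : 0 < ∑ p : Fin 4, nu1 p :=
      Finset.sum_pos (fun p _ => hnu1 p) Finset.univ_nonempty
    linarith
  rw [lt_div_iff₀ (mul_pos hN hA)] at hbound
  have hm6 : min (lam1 2) (lam2 2) ≤ mu1 2 * lam1 2 + mu2 2 * lam2 2 + c2 2 * mu2 2 * nu2 2
        + psi1 3 * theta 3 * mu1 3 * nu1 3
        + (1 - psi1 1) * theta 1 * mu1 1 * nu1 1 := by
    have h0 := min_le_convex (a := lam1 2) (b := lam2 2) (hmu1 2) (hmu2 2) (hmusum 2)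
    have h1 := mul_nonneg (mul_nonneg (hc2 2).1.le (hmu2 2)) (hnu2 2).le
    have h2 := mul_nonneg (mul_nonneg (mul_nonneg (indicator_nonneg (hpsi1 3)).1 (htheta 3).1)
      (hmu1 3)) (hnu1 3).le
    have h3 := mul_nonneg (mul_nonneg (mul_nonneg (indicator_nonneg (hpsi1 1)).2 (htheta 1).1)
      (hmu1 1)) (hnu1 1).le
    linarith
  have hm4 : min (lam1' 1) (lam2' 1) ≤
      mu1' 1 * lam1' 1 + mu2' 1 * lam2' 1 + c2 1 * mu2' 1 * nu2' 1
        + psi1' 0 * theta' 0 * mu1' 0 * nu1' 0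
        + (1 - psi1' 2) * theta' 2 * mu1' 2 * nu1' 2 := by
    have h0 := min_le_convex (a := lam1' 1) (b := lam2' 1) (hmu1' 1) (hmu2' 1) (hmusum' 1)
    have h1 := mul_nonneg (mul_nonneg (hc2 1).1.le (hmu2' 1)) (hnu2' 1).le
    have h2 := mul_nonneg (mul_nonneg (mul_nonneg (indicator_nonneg (hpsi1' 0)).1 (htheta' 0).1)
      (hmu1' 0)) (hnu1' 0).le
    have h3 := mul_nonneg (mul_nonneg (mul_nonneg (indicator_nonneg (hpsi1' 2)).2 (htheta' 2).1)
      (hmu1' 2)) (hnu1' 2).le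
    linarith
  have hm5 : psi2' 1 * c2 1 * mu2' 1 * nu2' 1 + psi2' 2 * c2 2 * mu2' 2 * nu2' 2
      ≤ (c2 1 + c2 2) * max (nu2' 1) (nu2' 2) := by
    have hle : ∀ p, mu2' p ≤ 1 := fun p => by linarith [hmu1' p, hmusum' p]
    rw [add_mul]
    exact add_le_add
      (indicator_term_le (hpsi2' 1) (hc2 1).1.le (hle 1) (hnu2' 1).le (le_max_left _ _))
      (indicator_term_le (hpsi2' 2) (hc2 2).1.le (hle 2) (hnu2' 2).le (le_max_right _ _))
  have hm1_nonneg : 0 ≤ ∑ p : Fin 4,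
      (mu1 p * lam1 p + mu2 p * lam2 p + theta p * mu1 p * nu1 p) :=
    Finset.sum_nonneg fun p _ => add_nonneg
      (add_nonneg (mul_nonneg (hmu1 p) (hlam1 p).le) (mul_nonneg (hmu2 p) (hlam2 p).le))
      (mul_nonneg (mul_nonneg (htheta p).1 (hmu1 p)) (hnu1 p).le)
  have hm1_le : ∑ p : Fin 4, (mu1 p * lam1 p + mu2 p * lam2 p + theta p * mu1 p * nu1 p)
      ≤ (∑ p : Fin 4, max (lam1 p) (lam2 p)) + 2 * ∑ p : Fin 4, nu1 p := by
    rw [Finset.mul_sum, ← Finset.sum_add_distrib]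
    refine Finset.sum_le_sum fun p _ => add_le_add
      (convex_le_max (hmu1 p) (hmu2 p) (hmusum p)) ?_
    refine mul_le_mul_of_nonneg_right ?_ (hnu1 p).le
    have hle : mu1 p ≤ 1 := by linarith [hmu2 p, hmusum p]
    exact (mul_le_of_le_one_right (htheta p).1 hle).trans (htheta p).2
  have hlow := mul_le_mul hm6 hm4 hL'.le (hL.le.trans hm6)
  have hup := mul_le_mul hm5 hm1_le hm1_nonneg
    (mul_nonneg (add_nonneg (hc2 1).1.le (hc2 2).1.le) hN.le)
  rw [← mul_assoc] at hbound
  rw [neg_mul_neg]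
  exact sub_pos.mpr (hup.trans_lt (hbound.trans_le hlow))
end

section
/- Consider two grid cells K and K''. For each p ∈ {1,2,3,4} let λ1(p), λ2(p), ν1(p), ν2(p) (for K) and λ1''(p), λ2''(p), ν1''(p), ν2''(p) (for K'') be positive reals; let μ1(p), μ2(p), μ1''(p), μ2''(p) be nonnegative with μ1(p)+μ2(p)=1 and μ1''(p)+μ2''(p)=1; let θ(p), θ''(p) ∈ [0,2]; let ψ1(p), ψ1''(p), ψ2''(p) ∈ {0,1}; and let c2(p) ∈ (0,1) be shared by the two cells. Define m1 = ∑_{p=1}^{4}( μ1(p)·λ1(p) + μ2(p)·λ2(p) + θ(p)·μ1(p)·ν1(p) ), m6 = −( μ1(3)·λ1(3) + μ2(3)·λ2(3) + c2(3)·μ2(3)·ν2(3) + ψ1(4)·θ(4)·μ1(4)·ν1(4) + (1−ψ1(2))·θ(2)·μ1(2)·ν1(2) ), m8'' = −( μ1''(4)·λ1''(4) + μ2''(4)·λ2''(4) + c2(4)·μ2''(4)·ν2''(4) + ψ1''(3)·θ''(3)·μ1''(3)·ν1''(3) + (1−ψ1''(1))·θ''(1)·μ1''(1)·ν1''(1)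 ), m7'' = (1−ψ2''(3))·c2(3)·μ2''(3)·ν2''(3) + (1−ψ2''(4))·c2(4)·μ2''(4)·ν2''(4), and A' = ∑_{p=1}^{4} max(λ1(p),λ2(p)) + 2·∑_{p=1}^{4} ν1(p). If c2(3) + c2(4) < ( min(λ1(3),λ2(3)) · min(λ1''(4),λ2''(4)) ) / ( max(ν2''(3),ν2''(4)) · A' ), then m6·m8'' − m7''·m1 > 0. (Condition (A3c) of the monotonicity criteria.) -/
/-!
All the terms of `-m6` and `-m8''` are nonnegative, and a convex combination dominates the minimum
of its two points, so `-m6 ≥ min(λ1(3), λ2(3)) > 0` and `-m8'' ≥ min(λ1''(4), λ2''(4)) > 0`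
(edges numbered from one). In the other direction `m7'' ≤ (c2(3) + c2(4)) · max(ν2''(3), ν2''(4))`,
since the weights `1 - ψ2''` and `μ2''` lie in `[0,1]`, and `0 ≤ m1 ≤ A'`, since a convex
combination is at most the maximum and `θ μ1 ≤ 2`. The smallness condition on `c2(3) + c2(4)` is
exactly that the product of the two upper bounds is below the product of the two lower bounds.
-/

lemma min_le_convexComb {a b x y : ℝ} (ha : 0 ≤ a) (hb : 0 ≤ b) (hab : a + b = 1) :
    min x y ≤ a * x + b * y := by
  have h1 := mul_le_mul_of_nonneg_left (min_le_left x y) ha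
  have h2 := mul_le_mul_of_nonneg_left (min_le_right x y) hb
  have h3 : a * min x y + b * min x y = min x y := by rw [← add_mul, hab, one_mul]
  linarith

lemma convexComb_le_max {a b x y : ℝ} (ha : 0 ≤ a) (hb : 0 ≤ b) (hab : a + b = 1) :
    a * x + b * y ≤ max x y := by
  have h1 := mul_le_mul_of_nonneg_left (le_max_left x y) ha
  have h2 := mul_le_mul_of_nonneg_left (le_max_right x y) hb
  have h3 : a * max x y + b * max x y = max x y := by rw [← add_mul, hab, one_mul]
  linarith

/-- Bounds one summand of `m7''`, with `psi = ψ2''`. -/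
lemma weighted_term_le {psi c mu nu M : ℝ} (hpsi : psi = 0 ∨ psi = 1) (hc : 0 ≤ c)
    (hmu : mu ≤ 1) (hnu : 0 ≤ nu) (hM : nu ≤ M) :
    (1 - psi) * c * mu * nu ≤ c * M := by
  have h1 : mu * nu ≤ M := (mul_le_of_le_one_left hnu hmu).trans hM
  have h2 : 0 ≤ c * M := mul_nonneg hc (hnu.trans hM)
  rcases hpsi with rfl | rfl
  · have := mul_le_mul_of_nonneg_left h1 hc
    linarith
  · linarith

/-- Condition (A3c): `m6·m8'' − m7''·m1 > 0` for a cell `K` and its northern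
neighbour `K''`. Edges `1,2,3,4` are indexed by `0,1,2,3 : Fin 4`. -/
theorem A3c_cross_product_positive
    (lam1 lam2 nu1 nu2 mu1 mu2 theta psi1 : Fin 4 → ℝ)
    (lam1'' lam2'' nu1'' nu2'' mu1'' mu2'' theta'' psi1'' psi2'' : Fin 4 → ℝ)
    (c2 : Fin 4 → ℝ)
    (hlam1 : ∀ p, 0 < lam1 p) (hlam2 : ∀ p, 0 < lam2 p)
    (hnu1 : ∀ p, 0 < nu1 p) (hnu2 : ∀ p, 0 < nu2 p)
    (hlam1'' : ∀ p, 0 < lam1'' p) (hlam2'' : ∀ p, 0 < lam2'' p)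
    (hnu1'' : ∀ p, 0 < nu1'' p) (hnu2'' : ∀ p, 0 < nu2'' p)
    (hmu1 : ∀ p, 0 ≤ mu1 p) (hmu2 : ∀ p, 0 ≤ mu2 p)
    (hmusum : ∀ p, mu1 p + mu2 p = 1)
    (hmu1'' : ∀ p, 0 ≤ mu1'' p) (hmu2'' : ∀ p, 0 ≤ mu2'' p)
    (hmusum'' : ∀ p, mu1'' p + mu2'' p = 1)
    (htheta : ∀ p, theta p ∈ Set.Icc (0 : ℝ) 2)
    (htheta'' : ∀ p, theta'' p ∈ Set.Icc (0 : ℝ) 2)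
    (hpsi1 : ∀ p, psi1 p = 0 ∨ psi1 p = 1)
    (hpsi1'' : ∀ p, psi1'' p = 0 ∨ psi1'' p = 1)
    (hpsi2'' : ∀ p, psi2'' p = 0 ∨ psi2'' p = 1)
    (hc2 : ∀ p, c2 p ∈ Set.Ioo (0 : ℝ) 1)
    (hbound : c2 2 + c2 3 <
      (min (lam1 2) (lam2 2) * min (lam1'' 3) (lam2'' 3)) /
        (max (nu2'' 2) (nu2'' 3) *
          ((∑ p : Fin 4, max (lam1 p) (lam2 p)) + 2 * ∑ p : Fin 4, nu1 p))) :
    (-(mu1 2 * lam1 2 + mu2 2 * lam2 2 + c2 2 * mu2 2 * nu2 2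
        + psi1 3 * theta 3 * mu1 3 * nu1 3
        + (1 - psi1 1) * theta 1 * mu1 1 * nu1 1))
      * (-(mu1'' 3 * lam1'' 3 + mu2'' 3 * lam2'' 3 + c2 3 * mu2'' 3 * nu2'' 3
        + psi1'' 2 * theta'' 2 * mu1'' 2 * nu1'' 2
        + (1 - psi1'' 0) * theta'' 0 * mu1'' 0 * nu1'' 0))
      - ((1 - psi2'' 2) * c2 2 * mu2'' 2 * nu2'' 2
        + (1 - psi2'' 3) * c2 3 * mu2'' 3 * nu2'' 3)
      * (∑ p : Fin 4,
          (mu1 p * lam1 p + mu2 p * lam2 p + theta p * mu1 p * nu1 p))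
      > 0 := by
  have psi_nonneg {psi : ℝ} (h : psi = 0 ∨ psi = 1) : 0 ≤ psi ∧ 0 ≤ 1 - psi := by
    rcases h with rfl | rfl <;> norm_num
  have hM : 0 < max (nu2'' 2) (nu2'' 3) := lt_max_of_lt_left (hnu2'' 2)
  have hA : 0 < (∑ p : Fin 4, max (lam1 p) (lam2 p)) + 2 * ∑ p : Fin 4, nu1 p := by
    have h1 : 0 < ∑ p : Fin 4, max (lam1 p) (lam2 p) :=
      Finset.sum_pos (fun p _ => lt_max_of_lt_left (hlam1 p)) Finset.univ_nonempty
    have h2 : 0 < ∑ p : Fin 4, nu1 p :=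
      Finset.sum_pos (fun p _ => hnu1 p) Finset.univ_nonempty
    linarith
  rw [lt_div_iff₀ (mul_pos hM hA)] at hbound
  have hm6 : min (lam1 2) (lam2 2) ≤ mu1 2 * lam1 2 + mu2 2 * lam2 2 + c2 2 * mu2 2 * nu2 2
      + psi1 3 * theta 3 * mu1 3 * nu1 3 + (1 - psi1 1) * theta 1 * mu1 1 * nu1 1 := by
    have h0 := min_le_convexComb (x := lam1 2) (y := lam2 2) (hmu1 2) (hmu2 2) (hmusum 2)
    have h1 : 0 ≤ c2 2 * mu2 2 * nu2 2 :=
      mul_nonneg (mul_nonneg (hc2 2).1.le (hmu2 2)) (hnu2 2).le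
    have h2 : 0 ≤ psi1 3 * theta 3 * mu1 3 * nu1 3 :=
      mul_nonneg (mul_nonneg (mul_nonneg (psi_nonneg (hpsi1 3)).1 (htheta 3).1) (hmu1 3))
        (hnu1 3).le
    have h3 : 0 ≤ (1 - psi1 1) * theta 1 * mu1 1 * nu1 1 :=
      mul_nonneg (mul_nonneg (mul_nonneg (psi_nonneg (hpsi1 1)).2 (htheta 1).1) (hmu1 1))
        (hnu1 1).le
    linarith
  have hm8 : min (lam1'' 3) (lam2'' 3) ≤ mu1'' 3 * lam1'' 3 + mu2'' 3 * lam2'' 3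
      + c2 3 * mu2'' 3 * nu2'' 3 + psi1'' 2 * theta'' 2 * mu1'' 2 * nu1'' 2
      + (1 - psi1'' 0) * theta'' 0 * mu1'' 0 * nu1'' 0 := by
    have h0 := min_le_convexComb (x := lam1'' 3) (y := lam2'' 3) (hmu1'' 3) (hmu2'' 3) (hmusum'' 3)
    have h1 : 0 ≤ c2 3 * mu2'' 3 * nu2'' 3 :=
      mul_nonneg (mul_nonneg (hc2 3).1.le (hmu2'' 3)) (hnu2'' 3).le
    have h2 : 0 ≤ psi1'' 2 * theta'' 2 * mu1'' 2 * nu1'' 2 :=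
      mul_nonneg (mul_nonneg (mul_nonneg (psi_nonneg (hpsi1'' 2)).1 (htheta'' 2).1) (hmu1'' 2))
        (hnu1'' 2).le
    have h3 : 0 ≤ (1 - psi1'' 0) * theta'' 0 * mu1'' 0 * nu1'' 0 :=
      mul_nonneg (mul_nonneg (mul_nonneg (psi_nonneg (hpsi1'' 0)).2 (htheta'' 0).1) (hmu1'' 0))
        (hnu1'' 0).le
    linarith
  have hm7 : (1 - psi2'' 2) * c2 2 * mu2'' 2 * nu2'' 2 + (1 - psi2'' 3) * c2 3 * mu2'' 3 * nu2'' 3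
      ≤ (c2 2 + c2 3) * max (nu2'' 2) (nu2'' 3) := by
    have hle (p : Fin 4) : mu2'' p ≤ 1 := by linarith [hmu1'' p, hmusum'' p]
    have h1 := weighted_term_le (hpsi2'' 2) (hc2 2).1.le (hle 2) (hnu2'' 2).le
      (le_max_left _ (nu2'' 3))
    have h2 := weighted_term_le (hpsi2'' 3) (hc2 3).1.le (hle 3) (hnu2'' 3).le
      (le_max_right (nu2'' 2) _)
    linarith
  have hm1_nonneg : 0 ≤ ∑ p : Fin 4,
      (mu1 p * lam1 p + mu2 p * lam2 p + theta p * mu1 p * nu1 p) :=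
    Finset.sum_nonneg fun p _ => add_nonneg
      (add_nonneg (mul_nonneg (hmu1 p) (hlam1 p).le) (mul_nonneg (hmu2 p) (hlam2 p).le))
      (mul_nonneg (mul_nonneg (htheta p).1 (hmu1 p)) (hnu1 p).le)
  have hm1 : ∑ p : Fin 4, (mu1 p * lam1 p + mu2 p * lam2 p + theta p * mu1 p * nu1 p)
      ≤ (∑ p : Fin 4, max (lam1 p) (lam2 p)) + 2 * ∑ p : Fin 4, nu1 p := by
    rw [Finset.mul_sum, ← Finset.sum_add_distrib]
    refine Finset.sum_le_sum fun p _ => add_le_add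
      (convexComb_le_max (hmu1 p) (hmu2 p) (hmusum p))
      (mul_le_mul_of_nonneg_right ?_ (hnu1 p).le)
    have hle : mu1 p ≤ 1 := by linarith [hmu2 p, hmusum p]
    exact (mul_le_of_le_one_right (htheta p).1 hle).trans (htheta p).2
  have hlower := mul_le_mul hm6 hm8 (lt_min (hlam1'' 3) (hlam2'' 3)).le
    ((lt_min (hlam1 2) (hlam2 2)).le.trans hm6)
  -- `m7''` itself need not be known nonnegative here: its upper bound is.
  have hupper := mul_le_mul hm7 hm1 hm1_nonneg
    (mul_nonneg (add_nonneg (hc2 2).1.le (hc2 3).1.le) hM.le)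
  rw [← mul_assoc] at hbound
  rw [neg_mul_neg, gt_iff_lt, sub_pos]
  exact hupper.trans_lt (hbound.trans_le hlower)
end

section
/- Consider two grid cells K and K''. For each p ∈ {1,2,3,4} let λ1(p), λ2(p), ν1(p), ν2(p) (for K) and λ1''(p), λ2''(p), ν1''(p), ν2''(p) (for K'') be positive reals; let μ1(p), μ2(p), μ1''(p), μ2''(p) be nonnegative with μ1(p)+μ2(p)=1 and μ1''(p)+μ2''(p)=1; let θ(p), θ''(p) ∈ [0,2]; let ψ1(p), ψ1''(p), ψ2''(p) ∈ {0,1}; and let c2(p) ∈ (0,1) be shared by the two cells. Define m1 = ∑_{p=1}^{4}( μ1(p)·λ1(p) + μ2(p)·λ2(p) + θ(p)·μ1(p)·ν1(p) ), m2 = −( μ1(1)·λ1(1) + μ2(1)·λ2(1) + c2(1)·μ2(1)·ν2(1) + ψ1(2)·θ(2)·μ1(2)·ν1(2) + (1−ψ1(4))·θ(4)·μ1(4)·ν1(4) ), m8'' = −( μ1''(4)·λ1''(4) + μ2''(4)·λ2''(4) + c2(4)·μ2''(4)·ν2''(4) + ψ1''(3)·θ''(3)·μ1''(3)·ν1''(3)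 + (1−ψ1''(1))·θ''(1)·μ1''(1)·ν1''(1) ), m9'' = ψ2''(1)·c2(1)·μ2''(1)·ν2''(1) + c2(4)·μ2''(4)·ν2''(4), and A' = ∑_{p=1}^{4} max(λ1(p),λ2(p)) + 2·∑_{p=1}^{4} ν1(p). If c2(1) + c2(4) < ( min(λ1(1),λ2(1)) · min(λ1''(4),λ2''(4)) ) / ( max(ν2''(1),ν2''(4)) · A' ), then m2·m8'' − m9''·m1 > 0. (Condition (A3d) of the monotonicity criteria.) -/
/-! The bound compares each factor with a quantity free of the weights `μ`, `θ`, `ψ`.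
A convex combination of `λ1, λ2` lies between their minimum and their maximum
(`min_le_convex`, `convex_le_max`), and all other terms of `-m2` and `-m8''` are nonnegative, so
`m2·m8'' ≥ min(λ1(1), λ2(1)) · min(λ1''(4), λ2''(4))`. On the other side `0 ≤ m1 ≤ A'` and
`m9'' ≤ (c2(1) + c2(4)) · max(ν2''(1), ν2''(4))`, since `ψ`, `μ ∈ [0,1]` and `θ ≤ 2`. The hypothesis,
cleared of its positive denominator, says that the product of the last two upper bounds is
smaller than the lower bound just given. -/

lemma min_le_convex_s13 {a b x y : ℝ} (ha : 0 ≤ a) (hb : 0 ≤ b) (h : a + b = 1) :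
    min x y ≤ a * x + b * y := by
  calc min x y = a * min x y + b * min x y := by rw [← add_mul, h, one_mul]
    _ ≤ a * x + b * y := by
      gcongr
      · exact min_le_left _ _
      · exact min_le_right _ _

lemma convex_le_max_s13 {a b x y : ℝ} (ha : 0 ≤ a) (hb : 0 ≤ b) (h : a + b = 1) :
    a * x + b * y ≤ max x y := by
  calc a * x + b * y
    _ ≤ a * max x y + b * max x y := by
      gcongr
      · exact le_max_left _ _
      · exact le_max_right _ _
    _ = max x y := by rw [← add_mul, h, one_mul]

/-- Condition (A3d): `m2·m8'' − m9''·m1 > 0` for a cell `K` and its northern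
neighbour `K''`. Edges `1,2,3,4` are indexed by `0,1,2,3 : Fin 4`. -/
theorem A3d_cross_product_positive
    (lam1 lam2 nu1 nu2 mu1 mu2 theta psi1 : Fin 4 → ℝ)
    (lam1'' lam2'' nu1'' nu2'' mu1'' mu2'' theta'' psi1'' psi2'' : Fin 4 → ℝ)
    (c2 : Fin 4 → ℝ)
    (hlam1 : ∀ p, 0 < lam1 p) (hlam2 : ∀ p, 0 < lam2 p)
    (hnu1 : ∀ p, 0 < nu1 p) (hnu2 : ∀ p, 0 < nu2 p)
    (hlam1'' : ∀ p, 0 < lam1'' p) (hlam2'' : ∀ p, 0 < lam2'' p)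
    (hnu1'' : ∀ p, 0 < nu1'' p) (hnu2'' : ∀ p, 0 < nu2'' p)
    (hmu1 : ∀ p, 0 ≤ mu1 p) (hmu2 : ∀ p, 0 ≤ mu2 p)
    (hmusum : ∀ p, mu1 p + mu2 p = 1)
    (hmu1'' : ∀ p, 0 ≤ mu1'' p) (hmu2'' : ∀ p, 0 ≤ mu2'' p)
    (hmusum'' : ∀ p, mu1'' p + mu2'' p = 1)
    (htheta : ∀ p, theta p ∈ Set.Icc (0 : ℝ) 2)
    (htheta'' : ∀ p, theta'' p ∈ Set.Icc (0 : ℝ) 2)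
    (hpsi1 : ∀ p, psi1 p = 0 ∨ psi1 p = 1)
    (hpsi1'' : ∀ p, psi1'' p = 0 ∨ psi1'' p = 1)
    (hpsi2'' : ∀ p, psi2'' p = 0 ∨ psi2'' p = 1)
    (hc2 : ∀ p, c2 p ∈ Set.Ioo (0 : ℝ) 1)
    (hbound : c2 0 + c2 3 <
      (min (lam1 0) (lam2 0) * min (lam1'' 3) (lam2'' 3)) /
        (max (nu2'' 0) (nu2'' 3) *
          ((∑ p : Fin 4, max (lam1 p) (lam2 p)) + 2 * ∑ p : Fin 4, nu1 p))) :
    (-(mu1 0 * lam1 0 + mu2 0 * lam2 0 + c2 0 * mu2 0 * nu2 0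
        + psi1 1 * theta 1 * mu1 1 * nu1 1
        + (1 - psi1 3) * theta 3 * mu1 3 * nu1 3))
      * (-(mu1'' 3 * lam1'' 3 + mu2'' 3 * lam2'' 3 + c2 3 * mu2'' 3 * nu2'' 3
        + psi1'' 2 * theta'' 2 * mu1'' 2 * nu1'' 2
        + (1 - psi1'' 0) * theta'' 0 * mu1'' 0 * nu1'' 0))
      - (psi2'' 0 * c2 0 * mu2'' 0 * nu2'' 0
        + c2 3 * mu2'' 3 * nu2'' 3)
      * (∑ p : Fin 4,
          (mu1 p * lam1 p + mu2 p * lam2 p + theta p * mu1 p * nu1 p))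
      > 0 := by
  have unit : ∀ {x : ℝ}, x = 0 ∨ x = 1 → 0 ≤ x ∧ 0 ≤ 1 - x := by
    rintro x (rfl | rfl) <;> norm_num
  have hm2 : min (lam1 0) (lam2 0) ≤ mu1 0 * lam1 0 + mu2 0 * lam2 0 + c2 0 * mu2 0 * nu2 0
      + psi1 1 * theta 1 * mu1 1 * nu1 1 + (1 - psi1 3) * theta 3 * mu1 3 * nu1 3 := by
    have h := min_le_convex_s13 (x := lam1 0) (y := lam2 0) (hmu1 0) (hmu2 0) (hmusum 0)
    have h1 : 0 ≤ c2 0 * mu2 0 * nu2 0 :=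
      mul_nonneg (mul_nonneg (hc2 0).1.le (hmu2 0)) (hnu2 0).le
    have h2 : 0 ≤ psi1 1 * theta 1 * mu1 1 * nu1 1 :=
      mul_nonneg (mul_nonneg (mul_nonneg (unit (hpsi1 1)).1 (htheta 1).1) (hmu1 1)) (hnu1 1).le
    have h3 : 0 ≤ (1 - psi1 3) * theta 3 * mu1 3 * nu1 3 :=
      mul_nonneg (mul_nonneg (mul_nonneg (unit (hpsi1 3)).2 (htheta 3).1) (hmu1 3)) (hnu1 3).le
    linarith
  have hm8 : min (lam1'' 3) (lam2'' 3) ≤ mu1'' 3 * lam1'' 3 + mu2'' 3 * lam2'' 3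
      + c2 3 * mu2'' 3 * nu2'' 3 + psi1'' 2 * theta'' 2 * mu1'' 2 * nu1'' 2
      + (1 - psi1'' 0) * theta'' 0 * mu1'' 0 * nu1'' 0 := by
    have h := min_le_convex_s13 (x := lam1'' 3) (y := lam2'' 3) (hmu1'' 3) (hmu2'' 3) (hmusum'' 3)
    have h1 : 0 ≤ c2 3 * mu2'' 3 * nu2'' 3 :=
      mul_nonneg (mul_nonneg (hc2 3).1.le (hmu2'' 3)) (hnu2'' 3).le
    have h2 : 0 ≤ psi1'' 2 * theta'' 2 * mu1'' 2 * nu1'' 2 :=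
      mul_nonneg (mul_nonneg (mul_nonneg (unit (hpsi1'' 2)).1 (htheta'' 2).1) (hmu1'' 2))
        (hnu1'' 2).le
    have h3 : 0 ≤ (1 - psi1'' 0) * theta'' 0 * mu1'' 0 * nu1'' 0 :=
      mul_nonneg (mul_nonneg (mul_nonneg (unit (hpsi1'' 0)).2 (htheta'' 0).1) (hmu1'' 0))
        (hnu1'' 0).le
    linarith
  have hm1 : ∑ p : Fin 4, (mu1 p * lam1 p + mu2 p * lam2 p + theta p * mu1 p * nu1 p)
      ≤ (∑ p : Fin 4, max (lam1 p) (lam2 p)) + 2 * ∑ p : Fin 4, nu1 p := by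
    rw [Finset.mul_sum, ← Finset.sum_add_distrib]
    refine Finset.sum_le_sum fun p _ => add_le_add
      (convex_le_max_s13 (hmu1 p) (hmu2 p) (hmusum p)) ?_
    have h : theta p * mu1 p ≤ 2 * 1 :=
      mul_le_mul (htheta p).2 (by linarith [hmusum p, hmu2 p]) (hmu1 p) zero_le_two
    exact mul_le_mul_of_nonneg_right (by linarith) (hnu1 p).le
  have hm1nonneg :
      0 ≤ ∑ p : Fin 4, (mu1 p * lam1 p + mu2 p * lam2 p + theta p * mu1 p * nu1 p) := by
    refine Finset.sum_nonneg fun p _ => add_nonneg (add_nonneg ?_ ?_) ?_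
    · exact mul_nonneg (hmu1 p) (hlam1 p).le
    · exact mul_nonneg (hmu2 p) (hlam2 p).le
    · exact mul_nonneg (mul_nonneg (htheta p).1 (hmu1 p)) (hnu1 p).le
  have hN : 0 < max (nu2'' 0) (nu2'' 3) := lt_max_of_lt_left (hnu2'' 0)
  have hA : 0 < (∑ p : Fin 4, max (lam1 p) (lam2 p)) + 2 * ∑ p : Fin 4, nu1 p := by
    have h1 : 0 < ∑ p : Fin 4, max (lam1 p) (lam2 p) :=
      Finset.sum_pos (fun p _ => lt_max_of_lt_left (hlam1 p)) Finset.univ_nonempty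
    have h2 : 0 < ∑ p : Fin 4, nu1 p :=
      Finset.sum_pos (fun p _ => hnu1 p) Finset.univ_nonempty
    linarith
  have hm9 : psi2'' 0 * c2 0 * mu2'' 0 * nu2'' 0 + c2 3 * mu2'' 3 * nu2'' 3
      ≤ (c2 0 + c2 3) * max (nu2'' 0) (nu2'' 3) := by
    have hmu : ∀ p, mu2'' p ≤ 1 := fun p => by linarith [hmusum'' p, hmu1'' p]
    have h0 : psi2'' 0 * c2 0 * mu2'' 0 ≤ c2 0 := by
      have h : psi2'' 0 * c2 0 ≤ c2 0 :=
        mul_le_of_le_one_left (hc2 0).1.le (by linarith [(unit (hpsi2'' 0)).2])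
      exact (mul_le_mul h (hmu 0) (hmu2'' 0) (hc2 0).1.le).trans_eq (mul_one _)
    have h3 : c2 3 * mu2'' 3 ≤ c2 3 := mul_le_of_le_one_right (hc2 3).1.le (hmu 3)
    rw [add_mul]
    exact add_le_add
      (mul_le_mul h0 (le_max_left _ _) (hnu2'' 0).le (hc2 0).1.le)
      (mul_le_mul h3 (le_max_right _ _) (hnu2'' 3).le (hc2 3).1.le)
  rw [lt_div_iff₀ (mul_pos hN hA), ← mul_assoc] at hbound
  have hL : 0 < min (lam1 0) (lam2 0) := lt_min (hlam1 0) (hlam2 0)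
  have hL'' : 0 < min (lam1'' 3) (lam2'' 3) := lt_min (hlam1'' 3) (hlam2'' 3)
  have hlow := mul_le_mul hm2 hm8 hL''.le (hL.le.trans hm2)
  have hup := mul_le_mul hm9 hm1 hm1nonneg
    (mul_nonneg (add_pos (hc2 0).1 (hc2 3).1).le hN.le)
  rw [neg_mul_neg]
  exact sub_pos.mpr (hup.trans_lt (hbound.trans_le hlow))
end
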